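/- Let L, M, B₀, m, ξ₀ be real numbers with M ≠ 1 and L·M ≠ 1, and set c = −2B₀(LM − 1)/(M − 1). Define u, v : ℝ × ℝ → ℝ by u(x,t) = (L − 1)B₀/(M − 1) − m·(L − 1)/(LM − 1)·tanh(m·(x + c·t) + ξ₀) and v(x,t) = B₀ − m·(M − 1)/(LM − 1)·tanh(m·(x + c·t) + ξ₀). Then u and v are smooth and satisfy the coupled Burgers system ∂u/∂t − ∂²u/∂x² + 2u·∂u/∂x + L·∂(uv)/∂x = 0 and ∂v/∂t − ∂²v/∂x² + 2v·∂v/∂x + M·∂(uv)/∂x = 0 at every point (x,t) ∈ ℝ × ℝ. -/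

import Mathlib

theorem aux_hasDerivAt_tanh (y : ℝ) : HasDerivAt Real.tanh (1 - Real.tanh y ^ 2) y := by
  have h : Real.tanh = fun z => Real.sinh z / Real.cosh z := by
    funext z
    exact Real.tanh_eq_sinh_div_cosh z
  have hc : Real.cosh y ≠ 0 := (Real.cosh_pos y).ne'
  have h2 := (Real.hasDerivAt_sinh y).div (Real.hasDerivAt_cosh y) hc
  rw [h]
  refine h2.congr_deriv ?_
  field_simp

theorem aux_contDiff_tanh : ContDiff ℝ (⊤ : ℕ∞) Real.tanh := by
  have h : Real.tanh = fun z => Real.sinh z / Real.cosh z := by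
    funext z
    exact Real.tanh_eq_sinh_div_cosh z
  rw [h]
  exact Real.contDiff_sinh.div Real.contDiff_cosh (fun z => (Real.cosh_pos z).ne')

theorem aux_x (m c ξ t x : ℝ) : HasDerivAt (fun x' => Real.tanh (m * (x' + c * t) + ξ))
    (m * (1 - Real.tanh (m * (x + c * t) + ξ) ^ 2)) x := by
  have h1 : HasDerivAt (fun x' : ℝ => m * (x' + c * t) + ξ) (m * 1) x :=
    (((hasDerivAt_id x).add_const (c * t)).const_mul m).add_const ξ
  refine ((aux_hasDerivAt_tanh _).comp x h1).congr_deriv ?_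
  ring

theorem aux_t (m c ξ t x : ℝ) : HasDerivAt (fun t' => Real.tanh (m * (x + c * t') + ξ))
    (m * c * (1 - Real.tanh (m * (x + c * t) + ξ) ^ 2)) t := by
  have h1 : HasDerivAt (fun t' : ℝ => m * (x + c * t') + ξ) (m * (c * 1)) t :=
    ((((hasDerivAt_id t).const_mul c).const_add x).const_mul m).add_const ξ
  refine ((aux_hasDerivAt_tanh _).comp t h1).congr_deriv ?_
  ring

theorem aux_xx (m c ξ t a p x : ℝ) :
    deriv (deriv (fun x' => a - p * Real.tanh (m * (x' + c * t) + ξ))) x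
      = 2 * p * m ^ 2 * Real.tanh (m * (x + c * t) + ξ)
        * (1 - Real.tanh (m * (x + c * t) + ξ) ^ 2) := by
  have h : deriv (fun x' => a - p * Real.tanh (m * (x' + c * t) + ξ))
      = fun x' => -(p * (m * (1 - Real.tanh (m * (x' + c * t) + ξ) ^ 2))) := by
    funext y
    exact (((aux_x m c ξ t y).const_mul p).const_sub a).deriv
  rw [h]
  have h2 := ((((((aux_x m c ξ t x).pow 2).const_sub 1).const_mul m).const_mul p).neg)
  refine (h2.congr_deriv ?_).deriv
  push_cast
  ring

/-- The kink pair u, v built from tanh with the stated constants is a smooth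
exact solution of the coupled Burgers system
uₜ - uₓₓ + 2u·uₓ + L·(uv)ₓ = 0, vₜ - vₓₓ + 2v·vₓ + M·(uv)ₓ = 0. -/
theorem stmt_19 (L M B₀ m ξ₀ : ℝ) (hM : M ≠ 1) (hLM : L * M ≠ 1)
    (c : ℝ) (hc : c = -(2 * B₀ * (L * M - 1)) / (M - 1))
    (u v : ℝ → ℝ → ℝ)
    (hu : u = fun x t => (L - 1) * B₀ / (M - 1)
      - m * (L - 1) / (L * M - 1) * Real.tanh (m * (x + c * t) + ξ₀))
    (hv : v = fun x t => B₀
      - m * (M - 1) / (L * M - 1) * Real.tanh (m * (x + c * t) + ξ₀)) :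
    (ContDiff ℝ (⊤ : ℕ∞) (fun X : ℝ × ℝ => u X.1 X.2) ∧
     ContDiff ℝ (⊤ : ℕ∞) (fun X : ℝ × ℝ => v X.1 X.2)) ∧
    ∀ x t : ℝ,
      (deriv (fun t' => u x t') t - deriv (deriv (fun x' => u x' t)) x
        + 2 * u x t * deriv (fun x' => u x' t) x
        + L * deriv (fun x' => u x' t * v x' t) x = 0) ∧
      (deriv (fun t' => v x t') t - deriv (deriv (fun x' => v x' t)) x
        + 2 * v x t * deriv (fun x' => v x' t) x
        + M * deriv (fun x' => u x' t * v x' t) x = 0) := by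
  have hM' : M - 1 ≠ 0 := sub_ne_zero.mpr hM
  have hLM' : L * M - 1 ≠ 0 := sub_ne_zero.mpr hLM
  obtain ⟨a, ha⟩ : ∃ a, a = (L - 1) * B₀ / (M - 1) := ⟨_, rfl⟩
  obtain ⟨p, hp⟩ : ∃ p, p = m * (L - 1) / (L * M - 1) := ⟨_, rfl⟩
  obtain ⟨q, hq⟩ : ∃ q, q = m * (M - 1) / (L * M - 1) := ⟨_, rfl⟩
  rw [← ha, ← hp] at hu
  rw [← hq] at hv
  have e1 : m - p - L * q = 0 := by rw [hp, hq]; field_simp; ring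
  have hp' : p * (L * M - 1) = m * (L - 1) := by rw [hp]; exact div_mul_cancel₀ _ hLM'
  have hq' : q * (L * M - 1) = m * (M - 1) := by rw [hq]; exact div_mul_cancel₀ _ hLM'
  have e2 : m - q - M * p = 0 := by
    apply mul_right_cancel₀ hLM'
    linear_combination -hq' - M * hp'
  have e3 : c + 2 * a + 2 * L * B₀ = 0 := by rw [hc, ha]; field_simp; ring
  have e4 : c + 2 * B₀ + 2 * M * a = 0 := by rw [hc, ha]; field_simp; ring
  have e5 : p * B₀ = q * a := by rw [hp, hq, ha]; field_simp
  subst hu hv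
  have hs : ContDiff ℝ (⊤ : ℕ∞)
      (fun X : ℝ × ℝ => Real.tanh (m * (X.1 + c * X.2) + ξ₀)) :=
    aux_contDiff_tanh.comp (by fun_prop)
  refine ⟨⟨contDiff_const.sub (contDiff_const.mul hs),
    contDiff_const.sub (contDiff_const.mul hs)⟩, fun x t => ?_⟩
  have dx : ∀ a p : ℝ, HasDerivAt (fun x' => a - p * Real.tanh (m * (x' + c * t) + ξ₀)) _ x :=
    fun a p => ((aux_x m c ξ₀ t x).const_mul p).const_sub a
  have dt : ∀ a p : ℝ, HasDerivAt (fun t' => a - p * Real.tanh (m * (x + c * t') + ξ₀)) _ t :=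
    fun a p => ((aux_t m c ξ₀ t x).const_mul p).const_sub a
  have dm := ((dx a p).mul (dx B₀ q)).deriv
  simp only [Pi.mul_def] at dm
  beta_reduce
  rw [dm, aux_xx, aux_xx, (dx a p).deriv, (dx B₀ q).deriv, (dt a p).deriv, (dt B₀ q).deriv]
  generalize Real.tanh (m * (x + c * t) + ξ₀) = T
  constructor
  · linear_combination (-2 * p * m * T * (1 - T ^ 2)) * e1 - (p * m * (1 - T ^ 2)) * e3
      + (L * m * (1 - T ^ 2)) * e5
  · linear_combination (-2 * q * m * T * (1 - T ^ 2)) * e2 - (q * m * (1 - T ^ 2)) * e4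
      - (M * m * (1 - T ^ 2)) * e5
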